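/- There exists an absolute constant C > 0 with the following property (the paper's Lemma 1). For every ε ∈ (0, 1/100], δ ∈ (0, 1), and η ∈ ℝ with |η| ≤ 1 − δ, set k = (√2/δ)·√(log(1/(2πε²))). Then there exists a real polynomial p of degree at most C · (√(1−|η|)/δ) · (1 + log(√(1−|η|)/δ)) · (1 + log(1/ε))^{3/2} such that |p(x)| ≤ 1 for all x ∈ [−1,1] and |p(x) − erf(k(x − η))| ≤ ε for all x ∈ [−1,1]. -/

import Mathlib

/-- The real error function `erf(x) = (2/√π) ∫₀ˣ e^{-t²} dt`. -/
noncomputable def erf (x : ℝ) : ℝ :=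
  2 / Real.sqrt Real.pi * ∫ t in (0:ℝ)..x, Real.exp (-t ^ 2)

/-!
The Gaussian `exp (-k² (z - η)²)` is entire, so its Chebyshev coefficients decay like `r⁻ⁿ`, where
`r = 1 + b` may be any Bernstein ellipse parameter. On the ellipse it is at most
`exp (4 k² b² (1 - |η|))` as soon as `b² ≤ 1 - |η|`: near the ends of `[-1, 1]` the ellipse has
height only about `b √(1 - |η|)`. With `b = δ / √(1 - |η|)` this exponent is `4 (k δ)²`, and
truncating the Chebyshev series after about `b⁻¹ ((k δ)² + log (b⁻¹ / ε))` terms suffices.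
Integrating the truncation from `η` approximates `erf (k (x - η))`, and a final rescaling by
`1 / (1 + ε / 2)` brings the polynomial below `1`.
-/

section Chebyshev

open AddCircle Polynomial

local instance fact_two_pi_pos : Fact (0 < 2 * Real.pi) := ⟨Real.two_pi_pos⟩

variable {E : Type*} [NormedAddCommGroup E] [NormedSpace ℂ E]

lemma fourierCoeff_neg_of_even {T : ℝ} [Fact (0 < T)] {f : AddCircle T → E}
    (hf : Function.Even f) (n : ℤ) : fourierCoeff f (-n) = fourierCoeff f n := by
  rw [fourierCoeff, fourierCoeff, ← MeasureTheory.integral_neg_eq_self]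
  simp only [fourier_apply, hf _, smul_neg, neg_smul, neg_neg]

lemma hasSum_fourierCoeff_mul_cos_of_even {f : C(AddCircle (2 * Real.pi), ℂ)}
    (hf : Function.Even f) (hsum : Summable (fourierCoeff f)) (θ : ℝ) :
    HasSum (fun n : ℕ => 2 * fourierCoeff f n * (Real.cos (n * θ) : ℂ))
      (f θ + fourierCoeff f 0) := by
  have hfourier (n : ℤ) :
      fourier n (θ : AddCircle (2 * Real.pi)) = Complex.exp (n * θ * Complex.I) := by
    rw [fourier_coe_apply]
    congr 1
    push_cast
    field_simp
  have hseries := (has_pointwise_sum_fourier_series_of_summable hsum θ).nat_add_neg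
  convert! hseries using 1
  · funext n
    rw [fourierCoeff_neg_of_even hf, hfourier, hfourier, Complex.ofReal_cos, Complex.cos]
    push_cast
    simp only [smul_eq_mul, neg_mul]
    ring
  · simp

lemma fourierCoeff_comp_toCircle (F : ℂ → E) (n : ℤ) :
    fourierCoeff (fun t : AddCircle (2 * Real.pi) => F (toCircle t)) n =
      (2 * Real.pi * Complex.I)⁻¹ • ∮ z in C(0, 1), z ^ (-n - 1) • F z := by
  have hintegral : (∮ z in C(0, 1), z ^ (-n - 1) • F z) = Complex.I •
      ∫ x in (0 : ℝ)..(0 + 2 * Real.pi),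
        fourier (-n) (x : AddCircle (2 * Real.pi)) •
          F (toCircle (x : AddCircle (2 * Real.pi))) := by
    rw [circleIntegral, ← intervalIntegral.integral_smul, zero_add]
    refine intervalIntegral.integral_congr fun x _ => ?_
    have hcircle : circleMap 0 1 x = toCircle (x : AddCircle (2 * Real.pi)) := by
      simp [toCircle, circleMap]
    have hne := Circle.coe_ne_zero (toCircle (x : AddCircle (2 * Real.pi)))
    simp only [deriv_circleMap, hcircle, smul_smul, fourier_apply, toCircle_zsmul, Circle.coe_zpow]
    congr 1
    rw [zpow_sub_one₀ hne]
    field_simp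
  rw [hintegral, fourierCoeff_eq_intervalIntegral _ n 0, smul_smul, ← Complex.coe_smul]
  congr 1
  push_cast
  field_simp

lemma circleIntegral_one_eq_of_differentiableAt {F : ℂ → E} {r : ℝ} (hr : 1 ≤ r)
    (hF : ∀ z : ℂ, ‖z‖ ∈ Set.Icc 1 r → DifferentiableAt ℂ F z) :
    (∮ z in C(0, 1), F z) = ∮ z in C(0, r), F z := by
  refine (Complex.circleIntegral_eq_of_differentiable_on_annulus_off_countable one_pos hr
    Set.countable_empty (fun z hz => ?_) fun z hz => ?_).symm
  · exact (hF z ⟨by simpa using hz.2, by simpa using hz.1⟩).continuousAt.continuousWithinAt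
  · have hz1 : 1 < ‖z‖ := by simpa using hz.1.2
    have hzr : ‖z‖ < r := by simpa using hz.1.1
    exact hF z ⟨hz1.le, hzr.le⟩

lemma norm_fourierCoeff_comp_toCircle_le {F : ℂ → E} {r M : ℝ} (hr : 1 ≤ r)
    (hF : ∀ z : ℂ, ‖z‖ ∈ Set.Icc 1 r → DifferentiableAt ℂ F z)
    (hM : ∀ z : ℂ, ‖z‖ = r → ‖F z‖ ≤ M) (n : ℤ) :
    ‖fourierCoeff (fun t : AddCircle (2 * Real.pi) => F (toCircle t)) n‖ ≤ M * r ^ (-n) := by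
  have hr0 : 0 < r := one_pos.trans_le hr
  have hdiff (z : ℂ) (hz : ‖z‖ ∈ Set.Icc 1 r) :
      DifferentiableAt ℂ (fun z => z ^ (-n - 1) • F z) z :=
    (differentiableAt_zpow.2 (Or.inl (norm_pos_iff.1 (one_pos.trans_le hz.1)))).smul (hF z hz)
  rw [fourierCoeff_comp_toCircle, circleIntegral_one_eq_of_differentiableAt hr hdiff]
  calc _ ≤ r * (r ^ (-n - 1) * M) := by
        refine circleIntegral.norm_two_pi_i_inv_smul_integral_le_of_norm_le_const hr0.le
          fun z hz => ?_
        have hzr : ‖z‖ = r := by simpa using hz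
        rw [norm_smul, norm_zpow, hzr]
        gcongr
        exact hM z hzr
    _ = M * r ^ (-n) := by
        rw [zpow_sub_one₀ hr0.ne']
        field_simp

lemma exists_polynomial_abs_sub_le_of_hasSum_chebyshev {a : ℕ → ℝ} {f : ℝ → ℝ} {K ρ : ℝ}
    (hρ : ρ < 1) (ha : ∀ n, |a n| ≤ K * ρ ^ n)
    (hf : ∀ x ∈ Set.Icc (-1 : ℝ) 1,
      HasSum (fun n : ℕ => a n * (Chebyshev.T ℝ n).eval x) (f x)) (N : ℕ) :
    ∃ p : ℝ[X], p.natDegree ≤ N ∧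
      ∀ x ∈ Set.Icc (-1 : ℝ) 1, |p.eval x - f x| ≤ K * ρ ^ (N + 1) / (1 - ρ) := by
  refine ⟨∑ n ∈ Finset.range (N + 1), C (a n) * Chebyshev.T ℝ n, ?_, fun x hx => ?_⟩
  · refine natDegree_sum_le_of_forall_le _ _ fun n hn => (natDegree_C_mul_le _ _).trans ?_
    rw [Chebyshev.natDegree_T, Int.natAbs_natCast]
    exact Nat.lt_succ_iff.1 (Finset.mem_range.1 hn)
  · have hterm (n : ℕ) : ‖a n * (Chebyshev.T ℝ n).eval x‖ ≤ K * ρ ^ n := by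
      rw [norm_mul]
      exact (mul_le_of_le_one_right (norm_nonneg _)
        (Chebyshev.abs_eval_T_real_le_one n (abs_le.2 hx))).trans (ha n)
    simpa only [eval_finsetSum, eval_mul, eval_C, Real.norm_eq_abs] using
      norm_sub_le_of_geometric_bound_of_hasSum hρ hterm (hf x hx) (N + 1)

/-- The Joukowski map. It sends the unit circle onto `[-1, 1]` and the circle of radius `r > 1`
onto the Bernstein ellipse with foci `±1` and parameter `r`, so that a function analytic inside
the ellipse becomes, by composition, one analytic on the annulus `1 ≤ ‖w‖ ≤ r`. -/
noncomputable def joukowski (w : ℂ) : ℂ := (w + w⁻¹) / 2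

lemma joukowski_inv (w : ℂ) : joukowski w⁻¹ = joukowski w := by
  rw [joukowski, joukowski, inv_inv, add_comm]

lemma joukowski_toCircle (θ : ℝ) :
    joukowski (AddCircle.toCircle (θ : AddCircle (2 * Real.pi))) = Real.cos θ := by
  simp [joukowski, AddCircle.toCircle, Complex.cos, ← Complex.exp_neg]

lemma differentiableAt_joukowski {w : ℂ} (hw : w ≠ 0) : DifferentiableAt ℂ joukowski w :=
  (differentiableAt_id.add (differentiableAt_inv hw)).div_const 2

theorem exists_polynomial_abs_sub_re_le_of_joukowski {g : ℂ → ℂ} {r M : ℝ} (hr : 1 < r)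
    (hg : ∀ w : ℂ, ‖w‖ ∈ Set.Icc 1 r → DifferentiableAt ℂ g (joukowski w))
    (hM : ∀ w : ℂ, ‖w‖ = r → ‖g (joukowski w)‖ ≤ M) (N : ℕ) :
    ∃ p : ℝ[X], p.natDegree ≤ N ∧
      ∀ x ∈ Set.Icc (-1 : ℝ) 1, |p.eval x - (g x).re| ≤ 2 * M / ((r - 1) * r ^ N) := by
  have hr0 : 0 < r := one_pos.trans hr
  have hF (w : ℂ) (hw : ‖w‖ ∈ Set.Icc 1 r) : DifferentiableAt ℂ (g ∘ joukowski) w :=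
    (hg w hw).comp w (differentiableAt_joukowski (norm_pos_iff.1 (one_pos.trans_le hw.1)))
  let G : C(AddCircle (2 * Real.pi), ℂ) :=
    ⟨fun t => (g ∘ joukowski) (AddCircle.toCircle t), continuous_iff_continuousAt.2 fun t =>
      ContinuousAt.comp (f := fun t => (AddCircle.toCircle t : ℂ))
        (hF _ (by rw [Circle.norm_coe]; exact ⟨le_rfl, hr.le⟩)).continuousAt
        (continuous_subtype_val.comp AddCircle.continuous_toCircle).continuousAt⟩
  have hGeven : Function.Even G := fun t => by
    simp [G, AddCircle.toCircle_neg, joukowski_inv]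
  have hcoeff (n : ℕ) : ‖fourierCoeff G n‖ ≤ M * r⁻¹ ^ n :=
    calc ‖fourierCoeff G n‖ ≤ M * r ^ (-(n : ℤ)) :=
          norm_fourierCoeff_comp_toCircle_le hr.le hF hM n
      _ = M * r⁻¹ ^ n := by rw [zpow_neg, zpow_natCast, inv_pow]
  have hgeom : Summable fun n : ℕ => M * r⁻¹ ^ n :=
    (summable_geometric_of_lt_one (inv_nonneg.2 hr0.le) (inv_lt_one_of_one_lt₀ hr)).mul_left M
  have hnat : Summable fun n : ℕ => fourierCoeff G n := .of_norm_bounded hgeom hcoeff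
  have hsum : Summable (fourierCoeff G) :=
    .of_nat_of_neg hnat (by simpa only [fourierCoeff_neg_of_even hGeven] using hnat)
  obtain ⟨q, hqdeg, hq⟩ := exists_polynomial_abs_sub_le_of_hasSum_chebyshev
    (a := fun n => 2 * (fourierCoeff G n).re) (f := fun x => (g x).re + (fourierCoeff G 0).re)
    (K := 2 * M) (inv_lt_one_of_one_lt₀ hr) (fun n => by
      rw [abs_mul, abs_two, mul_assoc]
      gcongr
      exact (Complex.abs_re_le_norm _).trans (hcoeff n)) (fun x hx => by
      obtain ⟨θ, rfl⟩ : ∃ θ, Real.cos θ = x := ⟨Real.arccos x, Real.cos_arccos hx.1 hx.2⟩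
      have hGθ : G θ = g (Real.cos θ) := congrArg g (joukowski_toCircle θ)
      have hcos := Complex.hasSum_re (hasSum_fourierCoeff_mul_cos_of_even hGeven hsum θ)
      simpa [Complex.re_mul_ofReal, hGθ, -Complex.ofReal_cos] using hcos) N
  refine ⟨q - C (fourierCoeff G 0).re, by rwa [natDegree_sub_C], fun x hx => ?_⟩
  calc |(q - C (fourierCoeff G 0).re).eval x - (g x).re|
      = |q.eval x - ((g x).re + (fourierCoeff G 0).re)| := by
        rw [eval_sub, eval_C, sub_sub, add_comm (g x).re]
    _ ≤ 2 * M * r⁻¹ ^ (N + 1) / (1 - r⁻¹) := hq x hx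
    _ = 2 * M / ((r - 1) * r ^ N) := by
        have : r - 1 ≠ 0 := (sub_pos.2 hr).ne'
        rw [inv_pow]
        field_simp
        ring

end Chebyshev

section Gaussian

lemma joukowski_re (w : ℂ) :
    (joukowski w).re = w.re / ‖w‖ * ((‖w‖ + ‖w‖⁻¹) / 2) := by
  rcases eq_or_ne w 0 with rfl | hw
  · simp [joukowski]
  · have : ‖w‖ ≠ 0 := norm_ne_zero_iff.2 hw
    simp only [joukowski, Complex.div_ofNat_re, Complex.add_re, Complex.inv_re,
      Complex.normSq_eq_norm_sq]
    field_simp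

lemma joukowski_im (w : ℂ) :
    (joukowski w).im = w.im / ‖w‖ * ((‖w‖ - ‖w‖⁻¹) / 2) := by
  rcases eq_or_ne w 0 with rfl | hw
  · simp [joukowski]
  · have : ‖w‖ ≠ 0 := norm_ne_zero_iff.2 hw
    simp only [joukowski, Complex.div_ofNat_im, Complex.add_im, Complex.inv_im,
      Complex.normSq_eq_norm_sq]
    field_simp
    ring

lemma one_sub_sq_mul_sq_sub_sq_le {A B c η : ℝ} (hA : A ^ 2 = 1 + B ^ 2) (hη : η ^ 2 ≤ 1) :
    (1 - c ^ 2) * B ^ 2 - (c * A - η) ^ 2 ≤ B ^ 2 * (1 - η ^ 2 + 2 * B ^ 2) := by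
  -- Complete the square in `c`; the maximum is at `c = A * η / (A ^ 2 + B ^ 2)`.
  have hsquare : (1 + 2 * B ^ 2) * (B ^ 2 * (1 - η ^ 2 + 2 * B ^ 2) -
      ((1 - c ^ 2) * B ^ 2 - (c * A - η) ^ 2)) =
      ((1 + 2 * B ^ 2) * c - A * η) ^ 2 + 2 * B ^ 4 * (1 - η ^ 2) + 4 * B ^ 6 := by
    linear_combination ((1 + 2 * B ^ 2) * c ^ 2 - η ^ 2) * hA
  have hη' : 0 ≤ 1 - η ^ 2 := sub_nonneg.2 hη
  refine sub_nonneg.1 (nonneg_of_mul_nonneg_right (a := 1 + 2 * B ^ 2) ?_ (by positivity))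
  rw [hsquare]
  positivity

lemma joukowski_im_sq_sub_re_sub_sq_le {w : ℂ} {η : ℝ} (hw : w ≠ 0) (hη : η ^ 2 ≤ 1) :
    (joukowski w).im ^ 2 - ((joukowski w).re - η) ^ 2 ≤
      ((‖w‖ - ‖w‖⁻¹) / 2) ^ 2 * (1 - η ^ 2 + 2 * ((‖w‖ - ‖w‖⁻¹) / 2) ^ 2) := by
  have hw0 : ‖w‖ ≠ 0 := norm_ne_zero_iff.2 hw
  have hunit : (w.im / ‖w‖) ^ 2 = 1 - (w.re / ‖w‖) ^ 2 := by
    rw [div_pow, div_pow, eq_sub_iff_add_eq, ← add_div, add_comm, Complex.sq_norm,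
      Complex.normSq_apply, ← sq, ← sq, div_self]
    rwa [sq, sq, ← Complex.normSq_apply, ← Complex.sq_norm, ne_eq, sq_eq_zero_iff]
  rw [joukowski_im, joukowski_re, mul_pow, hunit]
  exact one_sub_sq_mul_sq_sub_sq_le (by field_simp; ring) hη

lemma joukowski_im_sq_sub_re_sub_sq_le_of_norm_eq {w : ℂ} {η b : ℝ} (hb : 0 ≤ b)
    (hbη : b ^ 2 ≤ 1 - |η|) (hw : ‖w‖ = 1 + b) :
    (joukowski w).im ^ 2 - ((joukowski w).re - η) ^ 2 ≤ 4 * b ^ 2 * (1 - |η|) := by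
  have hη1 : |η| ≤ 1 := by linarith [sq_nonneg b]
  have hη2 : η ^ 2 ≤ 1 := sq_le_one_iff_abs_le_one η |>.2 hη1
  have hw0 : w ≠ 0 := norm_pos_iff.1 (by linarith)
  refine (joukowski_im_sq_sub_re_sub_sq_le hw0 hη2).trans ?_
  rw [hw]
  set B := (1 + b - (1 + b)⁻¹) / 2 with hB
  have hB0 : 0 ≤ B := by
    have : (1 + b)⁻¹ ≤ 1 := inv_le_one_of_one_le₀ (by linarith)
    linarith
  have hBb : B ≤ b := by
    have : 1 - b ≤ (1 + b)⁻¹ := by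
      rw [← one_div, le_div_iff₀ (by linarith)]
      linarith [sq_nonneg b]
    linarith
  have hB2 : B ^ 2 ≤ b ^ 2 := pow_le_pow_left₀ hB0 hBb 2
  have hη3 : 1 - η ^ 2 ≤ 2 * (1 - |η|) := by
    rw [← sq_abs]
    linarith [sq_nonneg (1 - |η|)]
  calc B ^ 2 * (1 - η ^ 2 + 2 * B ^ 2) ≤ b ^ 2 * (4 * (1 - |η|)) := by
        gcongr
        linarith
    _ = 4 * b ^ 2 * (1 - |η|) := by ring

lemma norm_exp_neg_ofReal_sq_mul_sub_sq (k η : ℝ) (z : ℂ) :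
    ‖Complex.exp (-(k : ℂ) ^ 2 * (z - η) ^ 2)‖ =
      Real.exp (k ^ 2 * (z.im ^ 2 - (z.re - η) ^ 2)) := by
  rw [Complex.norm_exp, ← Complex.ofReal_pow, ← Complex.ofReal_neg, Complex.re_ofReal_mul,
    sq (z - η), Complex.mul_re]
  simp only [Complex.sub_re, Complex.sub_im, Complex.ofReal_re, Complex.ofReal_im, sub_zero]
  ring_nf

lemma exists_polynomial_abs_sub_gaussian_le (k : ℝ) {η b : ℝ} (hb : 0 < b)
    (hbη : b ^ 2 ≤ 1 - |η|) (N : ℕ) :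
    ∃ p : Polynomial ℝ, p.natDegree ≤ N ∧ ∀ x ∈ Set.Icc (-1 : ℝ) 1,
      |p.eval x - Real.exp (-k ^ 2 * (x - η) ^ 2)| ≤
        2 * Real.exp (k ^ 2 * (4 * b ^ 2 * (1 - |η|))) / (b * (1 + b) ^ N) := by
  obtain ⟨p, hpdeg, hp⟩ := exists_polynomial_abs_sub_re_le_of_joukowski
    (g := fun z : ℂ => Complex.exp (-(k : ℂ) ^ 2 * (z - η) ^ 2))
    (r := 1 + b) (M := Real.exp (k ^ 2 * (4 * b ^ 2 * (1 - |η|)))) (by linarith)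
    (fun w _ => by fun_prop)
    (fun w hw => by
      rw [norm_exp_neg_ofReal_sq_mul_sub_sq]
      gcongr
      exact joukowski_im_sq_sub_re_sub_sq_le_of_norm_eq hb.le hbη hw) N
  refine ⟨p, hpdeg, fun x hx => ?_⟩
  have hre : (Complex.exp (-(k : ℂ) ^ 2 * ((x : ℂ) - η) ^ 2)).re =
      Real.exp (-k ^ 2 * (x - η) ^ 2) := by
    rw [← Complex.exp_ofReal_re]
    push_cast
    rfl
  simpa only [hre, add_sub_cancel_left] using hp x hx

end Gaussian

section Erf

lemma erf_neg (x : ℝ) : erf (-x) = -erf x := by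
  have hsubst := intervalIntegral.integral_comp_neg (a := 0) (b := x)
    (fun t : ℝ => Real.exp (-t ^ 2))
  simp only [neg_sq, neg_zero] at hsubst
  rw [erf, erf, hsubst, intervalIntegral.integral_symm, mul_neg]

lemma abs_erf_le_one (x : ℝ) : |erf x| ≤ 1 := by
  wlog hx : 0 ≤ x generalizing x
  · rw [← abs_neg, ← erf_neg]
    exact this (-x) (by linarith)
  have hint : MeasureTheory.Integrable fun t : ℝ => Real.exp (-t ^ 2) := by
    simpa using integrable_exp_neg_mul_sq one_pos
  have hnonneg : 0 ≤ ∫ t in (0 : ℝ)..x, Real.exp (-t ^ 2) :=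
    intervalIntegral.integral_nonneg hx fun t _ => (Real.exp_pos _).le
  have hle : ∫ t in (0 : ℝ)..x, Real.exp (-t ^ 2) ≤ √Real.pi / 2 := by
    calc ∫ t in (0 : ℝ)..x, Real.exp (-t ^ 2)
        ≤ ∫ t in Set.Ioi (0 : ℝ), Real.exp (-t ^ 2) := by
          rw [intervalIntegral.integral_of_le hx]
          exact MeasureTheory.setIntegral_mono_set hint.integrableOn
            (.of_forall fun t => (Real.exp_pos _).le) Set.Ioc_subset_Ioi_self.eventuallyLE
      _ = √Real.pi / 2 := by simpa using integral_gaussian_Ioi 1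
  have hpi : 0 < √Real.pi := Real.sqrt_pos.2 Real.pi_pos
  rw [erf, abs_of_nonneg (by positivity), div_mul_eq_mul_div, div_le_one hpi]
  linarith

lemma erf_mul_sub (k η x : ℝ) : erf (k * (x - η)) =
    2 * k / √Real.pi * ∫ t in η..x, Real.exp (-k ^ 2 * (t - η) ^ 2) := by
  have hshift := intervalIntegral.integral_comp_sub_right (a := η) (b := x)
    (fun t : ℝ => Real.exp (-k ^ 2 * t ^ 2)) η
  have hscale := intervalIntegral.mul_integral_comp_mul_left (a := 0) (b := x - η)
    (f := fun t : ℝ => Real.exp (-t ^ 2)) (c := k)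
  rw [sub_self] at hshift
  simp only [mul_zero, mul_pow, ← neg_mul] at hscale
  rw [hshift, erf, ← hscale]
  simp only [neg_mul]
  ring

end Erf

section PolynomialApproximation

open Polynomial

lemma exists_derivative_eq {K : Type*} [Field K] [CharZero K] (q : K[X]) :
    ∃ Q : K[X], derivative Q = q ∧ Q.natDegree ≤ q.natDegree + 1 := by
  refine ⟨∑ i ∈ Finset.range (q.natDegree + 1), C (q.coeff i / (i + 1)) * X ^ (i + 1), ?_, ?_⟩
  · rw [derivative_sum]
    conv_rhs => rw [q.as_sum_range_C_mul_X_pow]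
    refine Finset.sum_congr rfl fun i _ => ?_
    rw [derivative_C_mul_X_pow, Nat.cast_add_one, Nat.add_sub_cancel,
      div_mul_cancel₀ _ (Nat.cast_add_one_ne_zero i)]
  · refine natDegree_sum_le_of_forall_le _ _ fun i hi => (natDegree_C_mul_X_pow_le _ _).trans ?_
    exact Finset.mem_range.1 hi

lemma exists_polynomial_abs_sub_integral_le {f : ℝ → ℝ} {s : Set ℝ} {a e : ℝ} (q : ℝ[X])
    (hs : s.OrdConnected) (ha : a ∈ s) (hf : ContinuousOn f s)
    (hq : ∀ x ∈ s, |q.eval x - f x| ≤ e) :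
    ∃ Q : ℝ[X], Q.natDegree ≤ q.natDegree + 1 ∧
      ∀ x ∈ s, |Q.eval x - ∫ t in a..x, f t| ≤ e * |x - a| := by
  obtain ⟨Q, rfl, hQdeg⟩ := exists_derivative_eq q
  refine ⟨Q - C (Q.eval a), by rwa [natDegree_sub_C], fun x hx => ?_⟩
  have hsub : Set.uIcc a x ⊆ s := hs.uIcc_subset ha hx
  have hQint : IntervalIntegrable (fun t => (derivative Q).eval t) MeasureTheory.volume a x :=
    (derivative Q).continuous.intervalIntegrable _ _
  have hftc : ∫ t in a..x, (derivative Q).eval t = Q.eval x - Q.eval a :=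
    intervalIntegral.integral_eq_sub_of_hasDerivAt (fun t _ => Q.hasDerivAt t) hQint
  rw [eval_sub, eval_C, ← hftc,
    ← intervalIntegral.integral_sub hQint (hf.mono hsub).intervalIntegrable, ← Real.norm_eq_abs]
  exact intervalIntegral.norm_integral_le_of_norm_le_const fun t ht =>
    hq t (hsub (Set.uIoc_subset_uIcc ht))

lemma exists_polynomial_abs_eval_le_one {s : Set ℝ} {f : ℝ → ℝ} {ε : ℝ} (q : ℝ[X]) (hε : 0 ≤ ε)
    (hf : ∀ x ∈ s, |f x| ≤ 1) (hq : ∀ x ∈ s, |q.eval x - f x| ≤ ε / 2) :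
    ∃ p : ℝ[X], p.natDegree ≤ q.natDegree ∧ (∀ x ∈ s, |p.eval x| ≤ 1) ∧
      ∀ x ∈ s, |p.eval x - f x| ≤ ε := by
  have hpos : 0 < 1 + ε / 2 := by linarith
  refine ⟨C (1 + ε / 2)⁻¹ * q, natDegree_C_mul_le _ _, fun x hx => ?_, fun x hx => ?_⟩
  · rw [eval_mul, eval_C, inv_mul_eq_div, abs_div, abs_of_pos hpos, div_le_one hpos]
    linarith [abs_sub_abs_le_abs_sub (q.eval x) (f x), hf x hx, hq x hx]
  · have hsplit : (1 + ε / 2)⁻¹ * q.eval x - f x =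
        ((q.eval x - f x) - ε / 2 * f x) / (1 + ε / 2) := by
      field_simp
      ring
    rw [eval_mul, eval_C, hsplit, abs_div, abs_of_pos hpos, div_le_iff₀ hpos]
    calc |q.eval x - f x - ε / 2 * f x| ≤ |q.eval x - f x| + |ε / 2 * f x| := abs_sub _ _
      _ ≤ ε / 2 + ε / 2 * 1 := by
          rw [abs_mul, abs_of_nonneg (by positivity : (0:ℝ) ≤ ε / 2)]
          gcongr
          exacts [hq x hx, hf x hx]
      _ ≤ ε * (1 + ε / 2) := by linarith [mul_nonneg hε hε]

theorem exists_polynomial_abs_sub_erf_le (k : ℝ) {η b : ℝ} (hb : 0 < b)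
    (hbη : b ^ 2 ≤ 1 - |η|) (N : ℕ) :
    ∃ p : ℝ[X], p.natDegree ≤ N + 1 ∧ ∀ x ∈ Set.Icc (-1 : ℝ) 1,
      |p.eval x - erf (k * (x - η))| ≤
        8 * |k| * Real.exp (k ^ 2 * (4 * b ^ 2 * (1 - |η|))) / (b * (1 + b) ^ N) := by
  obtain ⟨q, hqdeg, hq⟩ := exists_polynomial_abs_sub_gaussian_le k hb hbη N
  set M := Real.exp (k ^ 2 * (4 * b ^ 2 * (1 - |η|)))
  have hη : η ∈ Set.Icc (-1 : ℝ) 1 := abs_le.1 (by linarith [sq_nonneg b])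
  obtain ⟨Q, hQdeg, hQ⟩ := exists_polynomial_abs_sub_integral_le q Set.ordConnected_Icc hη
    (by fun_prop) hq
  refine ⟨C (2 * k / √Real.pi) * Q, ?_, fun x hx => ?_⟩
  · exact (natDegree_C_mul_le _ _).trans (hQdeg.trans (Nat.succ_le_succ hqdeg))
  have hpi : 1 ≤ √Real.pi := Real.one_le_sqrt.2 (by linarith [Real.pi_gt_three])
  have hslope : |2 * k / √Real.pi| ≤ 2 * |k| := by
    rw [abs_div, abs_mul, abs_two, abs_of_pos (one_pos.trans_le hpi)]
    exact div_le_self (by positivity) hpi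
  have hdist : |x - η| ≤ 2 := abs_le.2 ⟨by linarith [hx.1, hη.2], by linarith [hx.2, hη.1]⟩
  rw [erf_mul_sub, eval_mul, eval_C, ← mul_sub, abs_mul]
  calc _ ≤ 2 * |k| * (2 * M / (b * (1 + b) ^ N) * |x - η|) := by
        gcongr
        exact hQ x hx
    _ ≤ 2 * |k| * (2 * M / (b * (1 + b) ^ N) * 2) := by gcongr
    _ = 8 * |k| * M / (b * (1 + b) ^ N) := by ring

end PolynomialApproximation

section DegreeEstimates

lemma exp_half_mul_le_one_add_pow {b : ℝ} (hb0 : 0 ≤ b) (hb1 : b ≤ 1) (N : ℕ) :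
    Real.exp (N * (b / 2)) ≤ (1 + b) ^ N := by
  have hbase : Real.exp (b / 2) ≤ 1 + b := by
    refine (Real.exp_bound_div_one_sub_of_interval (by linarith) (by linarith)).trans ?_
    rw [div_le_iff₀ (by linarith)]
    nlinarith
  rw [Real.exp_nat_mul]
  gcongr

lemma sixteen_mul_pow_mul_exp_le {ε t R : ℝ} {N : ℕ} (hε0 : 0 < ε) (hε1 : ε ≤ 1) (ht : 0 ≤ t)
    (hR : 1 ≤ R) (hN : 10 * R * (1 + Real.log R + t + Real.log (1 / ε)) ≤ N) :
    16 * R ^ 3 * Real.exp (5 * t) ≤ ε * (1 + R⁻¹) ^ N := by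
  have hR0 : 0 < R := one_pos.trans_le hR
  have hlogR : 0 ≤ Real.log R := Real.log_nonneg hR
  have hlogε : 0 ≤ Real.log (1 / ε) := Real.log_nonneg (one_le_one_div hε0 hε1)
  have hexponent : 5 + 3 * Real.log R + 5 * t + Real.log (1 / ε) ≤ N * (R⁻¹ / 2) := by
    calc 5 + 3 * Real.log R + 5 * t + Real.log (1 / ε)
        ≤ 5 * (1 + Real.log R + t + Real.log (1 / ε)) := by linarith
      _ = 10 * R * (1 + Real.log R + t + Real.log (1 / ε)) * (R⁻¹ / 2) := by
          field_simp
          ring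
      _ ≤ N * (R⁻¹ / 2) := by gcongr
  have hexp5 : 16 ≤ Real.exp 5 := by
    calc (16 : ℝ) ≤ 2 ^ 5 := by norm_num
      _ ≤ Real.exp 1 ^ 5 := by
          gcongr
          exact Real.exp_one_gt_two.le
      _ = Real.exp 5 := by
          rw [← Real.exp_nat_mul]
          norm_num
  calc 16 * R ^ 3 * Real.exp (5 * t) ≤ Real.exp 5 * R ^ 3 * Real.exp (5 * t) := by gcongr
    _ = ε * Real.exp (5 + 3 * Real.log R + 5 * t + Real.log (1 / ε)) := by
        have hcube : Real.exp (3 * Real.log R) = R ^ 3 := by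
          rw [← Real.exp_log hR0, ← Real.exp_nat_mul, Real.exp_log hR0]
          norm_num
        rw [Real.exp_add, Real.exp_add, Real.exp_add, hcube, Real.exp_log (by positivity)]
        field_simp
    _ ≤ ε * Real.exp (N * (R⁻¹ / 2)) := by gcongr
    _ ≤ ε * (1 + R⁻¹) ^ N := by
        gcongr
        exact exp_half_mul_le_one_add_pow (inv_nonneg.2 hR0.le) (inv_le_one_of_one_le₀ hR) N

lemma truncation_error_le {ε k t R : ℝ} {N : ℕ} (hε0 : 0 < ε) (hε1 : ε ≤ 1) (ht : 0 ≤ t)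
    (hR : 1 ≤ R) (hk : |k| ≤ R ^ 2 * Real.exp t)
    (hN : 10 * R * (1 + Real.log R + t + Real.log (1 / ε)) ≤ N) :
    8 * |k| * Real.exp (4 * t) / (R⁻¹ * (1 + R⁻¹) ^ N) ≤ ε / 2 := by
  have hR0 : 0 < R := one_pos.trans_le hR
  rw [div_le_iff₀ (by positivity)]
  calc 8 * |k| * Real.exp (4 * t) ≤ 8 * (R ^ 2 * Real.exp t) * Real.exp (4 * t) := by gcongr
    _ = R⁻¹ / 2 * (16 * R ^ 3 * Real.exp (5 * t)) := by
        rw [show 5 * t = t + 4 * t by ring, Real.exp_add]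
        field_simp
        ring
    _ ≤ R⁻¹ / 2 * (ε * (1 + R⁻¹) ^ N) :=
        mul_le_mul_of_nonneg_left (sixteen_mul_pow_mul_exp_le hε0 hε1 ht hR hN) (by positivity)
    _ = ε / 2 * (R⁻¹ * (1 + R⁻¹) ^ N) := by ring

lemma one_div_le_sq_sqrt_div {δ s : ℝ} (hδ : 0 < δ) (hs : δ ≤ s) : 1 / δ ≤ (√s / δ) ^ 2 := by
  rw [div_pow, Real.sq_sqrt (hδ.le.trans hs), div_le_div_iff₀ hδ (by positivity), one_mul, sq]
  gcongr

lemma one_le_sqrt_div {δ s : ℝ} (hδ : 0 < δ) (hs : δ ≤ s) (hs1 : s ≤ 1) : 1 ≤ √s / δ := by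
  rw [one_le_div hδ]
  exact Real.le_sqrt_of_sq_le ((pow_le_of_le_one hδ.le (hs.trans hs1) two_ne_zero).trans hs)

lemma abs_le_sq_sqrt_div_mul_exp {δ s : ℝ} (k : ℝ) (hδ : 0 < δ) (hs : δ ≤ s) :
    |k| ≤ (√s / δ) ^ 2 * Real.exp ((k * δ) ^ 2) := by
  have hexp : |k * δ| ≤ Real.exp ((k * δ) ^ 2) := by
    rw [← sq_abs]
    nlinarith [Real.add_one_le_exp (|k * δ| ^ 2), sq_nonneg (|k * δ| - 1)]
  calc |k| = 1 / δ * |k * δ| := by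
        rw [abs_mul, abs_of_pos hδ]
        field_simp
    _ ≤ (√s / δ) ^ 2 * Real.exp ((k * δ) ^ 2) := by
        gcongr
        exact one_div_le_sq_sqrt_div hδ hs

lemma sq_slope_mul_le {ε δ : ℝ} (hε0 : 0 < ε) (hε1 : ε ≤ 1) (hδ : δ ≠ 0) :
    (√2 / δ * √(Real.log (1 / (2 * Real.pi * ε ^ 2))) * δ) ^ 2 ≤ 4 * Real.log (1 / ε) := by
  have hlog : Real.log (1 / (2 * Real.pi * ε ^ 2)) ≤ 2 * Real.log (1 / ε) := by
    have hpow : 2 * Real.log (1 / ε) = Real.log ((1 / ε) ^ 2) := by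
      rw [Real.log_pow, Nat.cast_two]
    rw [hpow, one_div_pow]
    gcongr
    exact le_mul_of_one_le_left (by positivity) (by linarith [Real.pi_gt_three])
  have hnonneg : 0 ≤ 2 * Real.log (1 / ε) :=
    mul_nonneg zero_le_two (Real.log_nonneg (one_le_one_div hε0 hε1))
  calc (√2 / δ * √(Real.log (1 / (2 * Real.pi * ε ^ 2))) * δ) ^ 2
      = 2 * √(Real.log (1 / (2 * Real.pi * ε ^ 2))) ^ 2 := by
        rw [mul_right_comm, div_mul_cancel₀ _ hδ, mul_pow, Real.sq_sqrt zero_le_two]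
    _ ≤ 2 * √(2 * Real.log (1 / ε)) ^ 2 := by gcongr
    _ = 4 * Real.log (1 / ε) := by
        rw [Real.sq_sqrt hnonneg]
        ring

lemma one_add_add_le_mul_rpow {a t l : ℝ} (ha : 0 ≤ a) (hl : 0 ≤ l) (ht : t ≤ 4 * l) :
    1 + a + t + l ≤ 5 * ((1 + a) * (1 + l) ^ ((3 : ℝ) / 2)) := by
  calc 1 + a + t + l ≤ 5 * ((1 + a) * (1 + l)) := by linarith [mul_nonneg ha hl]
    _ ≤ 5 * ((1 + a) * (1 + l) ^ ((3 : ℝ) / 2)) := by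
        gcongr
        exact Real.self_le_rpow_of_one_le (by linarith) (by norm_num)

lemma degree_bound_le_mul_rpow {ε δ s : ℝ} (hε0 : 0 < ε) (hε1 : ε ≤ 1) (hδ : 0 < δ)
    (hs : δ ≤ s) (hs1 : s ≤ 1) :
    12 * (√s / δ) * (1 + Real.log (√s / δ) +
        (√2 / δ * √(Real.log (1 / (2 * Real.pi * ε ^ 2))) * δ) ^ 2 + Real.log (1 / ε)) ≤
      60 * (√s / δ) * (1 + Real.log (√s / δ)) * (1 + Real.log (1 / ε)) ^ ((3 : ℝ) / 2) := by
  have hlogs : 0 ≤ Real.log (√s / δ) := Real.log_nonneg (one_le_sqrt_div hδ hs hs1)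
  have hlogε : 0 ≤ Real.log (1 / ε) := Real.log_nonneg (one_le_one_div hε0 hε1)
  have hfactor := one_add_add_le_mul_rpow hlogs hlogε (sq_slope_mul_le hε0 hε1 hδ.ne')
  linarith [mul_le_mul_of_nonneg_left hfactor (by positivity : 0 ≤ 12 * (√s / δ))]

end DegreeEstimates

theorem shifted_erf_poly_approx_general {ε δ η : ℝ} (k : ℝ) (hε0 : 0 < ε) (hε1 : ε ≤ 1)
    (hδ : 0 < δ) (hη : |η| ≤ 1 - δ) :
    ∃ p : Polynomial ℝ,
      (p.natDegree : ℝ) ≤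
        12 * (√(1 - |η|) / δ) *
          (1 + Real.log (√(1 - |η|) / δ) + (k * δ) ^ 2 + Real.log (1 / ε)) ∧
      (∀ x ∈ Set.Icc (-1 : ℝ) 1, |p.eval x| ≤ 1) ∧
      (∀ x ∈ Set.Icc (-1 : ℝ) 1, |p.eval x - erf (k * (x - η))| ≤ ε) := by
  have hδη : δ ≤ 1 - |η| := by linarith
  have hη0 : 0 < 1 - |η| := hδ.trans_le hδη
  have hR1 := one_le_sqrt_div hδ hδη (sub_le_self _ (abs_nonneg η))
  have hk := abs_le_sq_sqrt_div_mul_exp k hδ hδη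
  have hR2 : (√(1 - |η|) / δ) ^ 2 = (1 - |η|) / δ ^ 2 := by rw [div_pow, Real.sq_sqrt hη0.le]
  set R := √(1 - |η|) / δ
  have hR0 : 0 < R := one_pos.trans_le hR1
  set L := 1 + Real.log R + (k * δ) ^ 2 + Real.log (1 / ε)
  have hL1 : 1 ≤ L := by
    linarith [Real.log_nonneg hR1, sq_nonneg (k * δ), Real.log_nonneg (one_le_one_div hε0 hε1)]
  have hRL : 1 ≤ R * L := one_le_mul_of_one_le_of_one_le hR1 hL1
  have hscale : R⁻¹ ^ 2 * (1 - |η|) = δ ^ 2 := by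
    rw [inv_pow, hR2]
    field_simp
  have hellipse : R⁻¹ ^ 2 ≤ 1 - |η| := by
    rw [inv_pow, hR2, inv_div, div_le_iff₀ hη0, ← sq]
    gcongr
  obtain ⟨q, hqdeg, hq⟩ :=
    exists_polynomial_abs_sub_erf_le k (inv_pos.2 hR0) hellipse ⌈10 * R * L⌉₊
  have hexponent : k ^ 2 * (4 * R⁻¹ ^ 2 * (1 - |η|)) = 4 * (k * δ) ^ 2 := by
    rw [mul_assoc 4, hscale]
    ring
  have herror := truncation_error_le hε0 hε1 (sq_nonneg (k * δ)) hR1 hk (Nat.le_ceil _)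
  rw [hexponent] at hq
  obtain ⟨p, hpdeg, hp⟩ := exists_polynomial_abs_eval_le_one q hε0.le
    (fun x _ => abs_erf_le_one (k * (x - η))) fun x hx => (hq x hx).trans herror
  refine ⟨p, ?_, hp⟩
  calc (p.natDegree : ℝ) ≤ ⌈10 * R * L⌉₊ + 1 := by exact_mod_cast hpdeg.trans hqdeg
    _ ≤ 12 * R * L := by linarith [Nat.ceil_lt_add_one (a := 10 * R * L) (by positivity)]

/-- The paper's Lemma 1: there is an absolute constant `C > 0` such that for all
`ε ∈ (0, 1/100]`, `δ ∈ (0,1)`, and `η` with `|η| ≤ 1 - δ`, setting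
`k = (√2/δ)·√(log(1/(2πε²)))`, the shifted error function `erf(k(x - η))` admits a
polynomial approximation `p` on `[-1,1]`, bounded by `1` there, accurate to `ε`, of
degree at most `C·(√(1-|η|)/δ)·(1 + log(√(1-|η|)/δ))·(1 + log(1/ε))^{3/2}`. -/
theorem shifted_erf_poly_approx :
    ∃ C : ℝ, 0 < C ∧
      ∀ ε δ η : ℝ, ε ∈ Set.Ioc (0 : ℝ) (1 / 100) → δ ∈ Set.Ioo (0 : ℝ) 1 →
        |η| ≤ 1 - δ →
        ∃ p : Polynomial ℝ,
          (p.natDegree : ℝ) ≤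
            C * (Real.sqrt (1 - |η|) / δ) * (1 + Real.log (Real.sqrt (1 - |η|) / δ)) *
              (1 + Real.log (1 / ε)) ^ ((3 : ℝ) / 2) ∧
          (∀ x ∈ Set.Icc (-1 : ℝ) 1, |p.eval x| ≤ 1) ∧
          (∀ x ∈ Set.Icc (-1 : ℝ) 1,
            |p.eval x -
              erf (Real.sqrt 2 / δ * Real.sqrt (Real.log (1 / (2 * Real.pi * ε ^ 2))) *
                (x - η))| ≤ ε) := by
  refine ⟨60, by norm_num, fun ε δ η ⟨hε0, hε⟩ ⟨hδ, _⟩ hη => ?_⟩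
  have hε1 : ε ≤ 1 := hε.trans (by norm_num)
  obtain ⟨p, hdeg, hp⟩ := shifted_erf_poly_approx_general
    (√2 / δ * √(Real.log (1 / (2 * Real.pi * ε ^ 2)))) hε0 hε1 hδ hη
  exact ⟨p, hdeg.trans (degree_bound_le_mul_rpow hε0 hε1 hδ (le_sub_comm.1 hη)
    (sub_le_self 1 (abs_nonneg η))), hp⟩
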